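/- arXiv:2110.06418 — 4 statements merged into one kernel-verified Lean document; each statement's English description precedes it below -/
import Mathlib

section
/- Let A = diag(0, 2) ∈ ℝ^{2×2}. For every symmetric positive definite Q ∈ ℝ^{2×2}, every positive definite R ∈ ℝ^{1×1}, and every discount factor γ ∈ (0,1] with 4γ < 1 (so that √γ·A is stable), there exists a matrix B ∈ ℝ^{2×1} such that the controllability matrix [B, AB] ∈ ℝ^{2×2} is invertible, and yet every controller K ∈ ℝ^{1×2} with spectral radius ρ(A + BK) < 1 satisfies tr(P_{K,γ}) > tr(P_{0,γ}), where 0 denotes the zero controller. In particular, no minimizer of the γ-discounted LQR cost K ↦ tr(P_{K,γ}) is a stabilizing controller for (A,B). -/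
open Matrix

/-- A real square matrix is stable if every complex eigenvalue has modulus `< 1`. -/
def IsStable {n : ℕ} (M : Matrix (Fin n) (Fin n) ℝ) : Prop :=
  ∀ μ ∈ spectrum ℂ (M.map Complex.ofReal), ‖μ‖ < 1

/-- `P_{K,γ} = Σ_t γ^t ((A+BK)^t)ᵀ (Q + KᵀRK) (A+BK)^t`, the solution of the discounted
Lyapunov equation when `√γ (A+BK)` is stable.  Its trace is the `γ`-discounted LQR cost
averaged over initial states on the sphere of radius `√d`. -/
noncomputable def lyapP {d m : ℕ} (A : Matrix (Fin d) (Fin d) ℝ) (B : Matrix (Fin d) (Fin m) ℝ)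
    (Q : Matrix (Fin d) (Fin d) ℝ) (R : Matrix (Fin m) (Fin m) ℝ)
    (K : Matrix (Fin m) (Fin d) ℝ) (γ : ℝ) : Matrix (Fin d) (Fin d) ℝ :=
  ∑' t : ℕ, γ ^ t • (((A + B * K) ^ t)ᵀ * (Q + Kᵀ * R * K) * (A + B * K) ^ t)

/-!
A perturbation that stabilizes a matrix with an eigenvalue outside the closed unit disc cannot be
arbitrarily small: at such a point `μ` the characteristic polynomial of a stable matrix is at least
`(‖μ‖ - 1) ^ d` in modulus, while that of the unstable matrix vanishes. Hence if the input matrix is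
`ε • B`, every stabilizing `K` has norm at least of order `1 / ε`, and as `R` is positive definite,
the control cost of the very first time step already tends to infinity as `ε → 0`. The zero
controller ignores the input matrix, so its cost does not depend on `ε`.
-/

open Filter Topology

lemma pow_natDegree_le_norm_eval {𝕜 : Type*} [NormedField 𝕜] {p : Polynomial 𝕜} (hp : p.Splits)
    (hmonic : p.Monic) {r : ℝ} (hroots : ∀ z ∈ p.roots, ‖z‖ ≤ r) {μ : 𝕜} (hμ : r ≤ ‖μ‖) :
    (‖μ‖ - r) ^ p.natDegree ≤ ‖p.eval μ‖ := by
  rw [hp.eval_eq_prod_roots_of_monic hmonic, hp.natDegree_eq_card_roots]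
  have hfactor : ∀ z ∈ p.roots, ‖μ‖ - r ≤ ‖μ - z‖ := fun z hz ↦
    (sub_le_sub_left (hroots z hz) _).trans (norm_sub_norm_le μ z)
  calc (‖μ‖ - r) ^ p.roots.card
      = (p.roots.map fun _ ↦ ‖μ‖ - r).prod := by
        rw [Multiset.map_const', Multiset.prod_replicate]
    _ ≤ (p.roots.map fun z ↦ ‖μ - z‖).prod :=
        Multiset.prod_map_le_prod_map₀ _ _ (fun _ _ ↦ sub_nonneg.2 hμ) hfactor
    _ = ‖(p.roots.map fun z ↦ μ - z).prod‖ := p.roots.prod_hom' (normHom : 𝕜 →*₀ ℝ) _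

lemma IsStable.pow_le_norm_eval_charpoly {d : ℕ} {M : Matrix (Fin d) (Fin d) ℝ} (hM : IsStable M)
    {μ : ℂ} (hμ : 1 ≤ ‖μ‖) :
    (‖μ‖ - 1) ^ d ≤ ‖(M.map Complex.ofReal).charpoly.eval μ‖ := by
  have hroots : ∀ z ∈ (M.map Complex.ofReal).charpoly.roots, ‖z‖ ≤ 1 := fun z hz ↦
    (hM z (mem_spectrum_of_isRoot_charpoly (Polynomial.isRoot_of_mem_roots hz))).le
  simpa using pow_natDegree_le_norm_eval (IsAlgClosed.splits _) (charpoly_monic _) hroots hμ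

lemma eventually_not_isStable {d : ℕ} {A : Matrix (Fin d) (Fin d) ℝ} {μ : ℂ}
    (hμA : μ ∈ spectrum ℂ (A.map Complex.ofReal)) (hμ : 1 < ‖μ‖) :
    ∀ᶠ M in 𝓝 A, ¬ IsStable M := by
  have hcont : Continuous fun M : Matrix (Fin d) (Fin d) ℝ ↦
      ‖(M.map Complex.ofReal).charpoly.eval μ‖ := by
    simp only [eval_charpoly]
    have hmap := continuous_id.matrix_map (n := Fin d) (m := Fin d) Complex.continuous_ofReal
    exact (continuous_const.sub hmap).matrix_det.norm
  have hroot : ‖(A.map Complex.ofReal).charpoly.eval μ‖ < (‖μ‖ - 1) ^ d := by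
    rw [(mem_spectrum_iff_isRoot_charpoly.1 hμA).eq_zero, norm_zero]
    exact pow_pos (sub_pos.2 hμ) d
  filter_upwards [hcont.continuousAt.eventually_lt_const hroot] with M hlt hM
  exact hlt.not_ge (hM.pow_le_norm_eval_charpoly hμ.le)

lemma eventually_norm_pow_le_of_spectralRadius_lt {𝔸 : Type*} [NormedRing 𝔸] [NormedAlgebra ℂ 𝔸]
    [CompleteSpace 𝔸] {a : 𝔸} {r : NNReal} (h : spectralRadius ℂ a < r) :
    ∀ᶠ t : ℕ in atTop, ‖a ^ t‖ ≤ r ^ t := by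
  have hgelfand := spectrum.pow_nnnorm_pow_one_div_tendsto_nhds_spectralRadius a
  filter_upwards [hgelfand.eventually_lt_const h, eventually_gt_atTop 0] with t hroot ht
  have ht' : (0 : ℝ) < t := Nat.cast_pos.2 ht
  rw [one_div, ENNReal.rpow_inv_lt_iff ht', ENNReal.rpow_natCast] at hroot
  exact_mod_cast hroot.le

section FrobeniusNorm

attribute [local instance] frobeniusNormedAddCommGroup frobeniusNormedSpace frobeniusNormedRing
  frobeniusNormedAlgebra

lemma IsStable.exists_eventually_norm_pow_le {d : ℕ} {M : Matrix (Fin d) (Fin d) ℝ}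
    (hM : IsStable M) : ∃ r : NNReal, r < 1 ∧ ∀ᶠ t : ℕ in atTop, ‖M ^ t‖ ≤ r ^ t := by
  have hρ : spectralRadius ℂ (M.map Complex.ofReal) < (1 : NNReal) := by
    rcases subsingleton_or_nontrivial (Matrix (Fin d) (Fin d) ℂ) with _ | _
    · simp
    · exact spectrum.spectralRadius_lt_of_forall_lt _ hM
  obtain ⟨r, hρr, hr⟩ := ENNReal.lt_iff_exists_nnreal_btwn.1 hρ
  refine ⟨r, by exact_mod_cast hr, ?_⟩
  filter_upwards [eventually_norm_pow_le_of_spectralRadius_lt hρr] with t ht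
  have hmap : (M.map Complex.ofReal) ^ t = (M ^ t).map Complex.ofReal :=
    (Matrix.map_pow M Complex.ofRealHom t).symm
  rwa [hmap, frobenius_norm_map_eq _ _ Complex.norm_real] at ht

lemma IsStable.summable_discounted {d : ℕ} {M : Matrix (Fin d) (Fin d) ℝ} (hM : IsStable M)
    (S : Matrix (Fin d) (Fin d) ℝ) {γ : ℝ} (hγ : γ ∈ Set.Icc 0 1) :
    Summable fun t : ℕ ↦ γ ^ t • ((M ^ t)ᵀ * S * M ^ t) := by
  obtain ⟨r, hr, hpow⟩ := hM.exists_eventually_norm_pow_le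
  refine Summable.of_norm_bounded_eventually_nat (g := fun t ↦ ‖S‖ * (r : ℝ) ^ t)
    ((summable_geometric_of_lt_one r.2 hr).mul_left _) ?_
  filter_upwards [hpow] with t ht
  have hrt : (r : ℝ) ^ t ≤ 1 := pow_le_one₀ r.2 (le_of_lt hr)
  calc ‖γ ^ t • ((M ^ t)ᵀ * S * M ^ t)‖
      = γ ^ t * ‖(M ^ t)ᵀ * S * M ^ t‖ := by
        rw [norm_smul, Real.norm_of_nonneg (pow_nonneg hγ.1 t)]
    _ ≤ 1 * (‖(M ^ t)ᵀ‖ * ‖S‖ * ‖M ^ t‖) := by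
        gcongr
        · exact pow_le_one₀ hγ.1 hγ.2
        · exact norm_mul₃_le
    _ ≤ 1 * (1 * ‖S‖ * r ^ t) := by
        rw [frobenius_norm_transpose]
        gcongr
        exact ht.trans hrt
    _ = ‖S‖ * r ^ t := by ring

lemma exists_pos_forall_isStable_add_le_norm {d : ℕ} {A : Matrix (Fin d) (Fin d) ℝ} {μ : ℂ}
    (hμA : μ ∈ spectrum ℂ (A.map Complex.ofReal)) (hμ : 1 < ‖μ‖) :
    ∃ δ > 0, ∀ E, IsStable (A + E) → δ ≤ ‖E‖ := by
  obtain ⟨δ, hδ, hunstable⟩ := Metric.eventually_nhds_iff.1 (eventually_not_isStable hμA hμ)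
  refine ⟨δ, hδ, fun E hE ↦ not_lt.1 fun hlt ↦ hunstable ?_ hE⟩
  rwa [dist_self_add_left]

lemma trace_transpose_mul_self_eq_sq_norm {m n : Type*} [Fintype m] [Fintype n] (K : Matrix m n ℝ) :
    (Kᵀ * K).trace = ‖K‖ ^ 2 := by
  rw [frobenius_norm_def, ← Real.sqrt_eq_rpow, Real.sq_sqrt (by positivity), Finset.sum_comm]
  simp [trace, mul_apply, ← sq]

open scoped MatrixOrder in
lemma exists_pos_mul_sq_norm_le_trace {m : Type*} [Fintype m] {R : Matrix m m ℝ}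
    (hR : R.PosDef) (n : Type*) [Fintype n] :
    ∃ r > 0, ∀ K : Matrix m n ℝ, r * ‖K‖ ^ 2 ≤ (Kᵀ * R * K).trace := by
  classical
  rcases isEmpty_or_nonempty m with _ | _
  · exact ⟨1, one_pos, fun K ↦ by simp [Subsingleton.elim K 0]⟩
  obtain ⟨r, hr, hle⟩ := (CFC.exists_pos_algebraMap_le_iff hR.isHermitian).2
    fun x hx ↦ hR.isStrictlyPositive.spectrum_pos hx
  refine ⟨r, hr, fun K ↦ ?_⟩
  have hnonneg := ((le_iff.1 hle).conjTranspose_mul_mul_same K).trace_nonneg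
  rw [conjTranspose_eq_transpose_of_trivial, Matrix.mul_sub, Matrix.sub_mul, trace_sub,
    Algebra.algebraMap_eq_smul_one, Matrix.mul_smul, Matrix.mul_one, Matrix.smul_mul, trace_smul,
    trace_transpose_mul_self_eq_sq_norm, smul_eq_mul] at hnonneg
  linarith

lemma lyapP_zero_controller {d m : ℕ} (A : Matrix (Fin d) (Fin d) ℝ)
    (B B' : Matrix (Fin d) (Fin m) ℝ) (Q : Matrix (Fin d) (Fin d) ℝ)
    (R : Matrix (Fin m) (Fin m) ℝ) (γ : ℝ) :
    lyapP A B Q R 0 γ = lyapP A B' Q R 0 γ := by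
  simp only [lyapP, Matrix.mul_zero]

lemma trace_controlCost_le_trace_lyapP {d m : ℕ} {A : Matrix (Fin d) (Fin d) ℝ}
    {B : Matrix (Fin d) (Fin m) ℝ} {Q : Matrix (Fin d) (Fin d) ℝ} {R : Matrix (Fin m) (Fin m) ℝ}
    {K : Matrix (Fin m) (Fin d) ℝ} (hQ : Q.PosSemidef) (hR : R.PosSemidef) {γ : ℝ}
    (hγ : γ ∈ Set.Icc 0 1) (hK : IsStable (A + B * K)) :
    (Kᵀ * R * K).trace ≤ (lyapP A B Q R K γ).trace := by
  have hS : (Q + Kᵀ * R * K).PosSemidef := hQ.add (hR.conjTranspose_mul_mul_same K)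
  have htrace := (hK.summable_discounted (Q + Kᵀ * R * K) hγ).hasSum.map
    (traceAddMonoidHom (Fin d) ℝ) continuous_id.matrix_trace
  have hnonneg : ∀ t : ℕ, 0 ≤ (γ ^ t • (((A + B * K) ^ t)ᵀ * (Q + Kᵀ * R * K) *
      (A + B * K) ^ t)).trace := fun t ↦
    ((hS.conjTranspose_mul_mul_same ((A + B * K) ^ t)).smul (pow_nonneg hγ.1 t)).trace_nonneg
  calc (Kᵀ * R * K).trace
      ≤ (Q + Kᵀ * R * K).trace := by
        rw [trace_add]
        exact le_add_of_nonneg_left hQ.trace_nonneg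
    _ ≤ (lyapP A B Q R K γ).trace := by
        simpa [lyapP] using le_hasSum htrace 0 fun t _ ↦ hnonneg t

theorem reward_shaping_impossible_general {d m : ℕ} {A : Matrix (Fin d) (Fin d) ℝ}
    (B : Matrix (Fin d) (Fin m) ℝ) {Q : Matrix (Fin d) (Fin d) ℝ} {R : Matrix (Fin m) (Fin m) ℝ}
    (hQ : Q.PosSemidef) (hR : R.PosDef) {γ : ℝ} (hγ : γ ∈ Set.Icc 0 1)
    {μ : ℂ} (hμA : μ ∈ spectrum ℂ (A.map Complex.ofReal)) (hμ : 1 < ‖μ‖) (c : ℝ) :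
    ∀ᶠ ε in 𝓝 (0 : ℝ), ∀ K : Matrix (Fin m) (Fin d) ℝ, IsStable (A + ε • B * K) →
      c < (lyapP A (ε • B) Q R K γ).trace := by
  obtain ⟨δ, hδ, hdist⟩ := exists_pos_forall_isStable_add_le_norm hμA hμ
  obtain ⟨r, hr, hcoercive⟩ := exists_pos_mul_sq_norm_le_trace hR (Fin d)
  have hcont : Continuous fun ε : ℝ ↦ (|ε| * ‖B‖) ^ 2 * c := by fun_prop
  have hsmall : ∀ᶠ ε in 𝓝 (0 : ℝ), (|ε| * ‖B‖) ^ 2 * c < r * δ ^ 2 :=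
    hcont.continuousAt.eventually_lt_const (by simpa using mul_pos hr (pow_pos hδ 2))
  filter_upwards [hsmall] with ε hε K hK
  have hδK : δ ≤ |ε| * ‖B‖ * ‖K‖ := by
    calc δ ≤ ‖ε • B * K‖ := hdist _ hK
      _ ≤ ‖ε • B‖ * ‖K‖ := frobenius_norm_mul _ _
      _ = |ε| * ‖B‖ * ‖K‖ := by rw [norm_smul, Real.norm_eq_abs]
  have hcost : r * ‖K‖ ^ 2 ≤ (lyapP A (ε • B) Q R K γ).trace :=
    (hcoercive K).trans (trace_controlCost_le_trace_lyapP hQ hR.posSemidef hγ hK)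
  refine lt_of_mul_lt_mul_left ?_ (sq_nonneg (|ε| * ‖B‖))
  calc (|ε| * ‖B‖) ^ 2 * c < r * δ ^ 2 := hε
    _ ≤ r * (|ε| * ‖B‖ * ‖K‖) ^ 2 := by gcongr
    _ = (|ε| * ‖B‖) ^ 2 * (r * ‖K‖ ^ 2) := by ring
    _ ≤ (|ε| * ‖B‖) ^ 2 * (lyapP A (ε • B) Q R K γ).trace := by gcongr

end FrobeniusNorm

/-- Impossibility of reward shaping: for `A = diag(0,2)`, any positive definite costs `Q, R`
and any discount `γ` with `√γ·A` stable (i.e. `4γ < 1`), there is a `B` making `(A,B)`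
controllable and yet every controller `K` stabilizing `A + BK` has strictly larger
`γ`-discounted cost than the zero controller; hence no minimizer of the discounted LQR cost
is stabilizing. -/
theorem reward_shaping_impossible
    (Q : Matrix (Fin 2) (Fin 2) ℝ) (R : Matrix (Fin 1) (Fin 1) ℝ)
    (hQ : Q.PosDef) (hR : R.PosDef)
    (γ : ℝ) (hγ : γ ∈ Set.Ioc (0 : ℝ) 1) (hγA : 4 * γ < 1) :
    ∃ B : Matrix (Fin 2) (Fin 1) ℝ,
      IsUnit (!![B 0 0, ((!![0, 0; 0, 2] : Matrix (Fin 2) (Fin 2) ℝ) * B) 0 0;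
                 B 1 0, ((!![0, 0; 0, 2] : Matrix (Fin 2) (Fin 2) ℝ) * B) 1 0])
      ∧ ∀ K : Matrix (Fin 1) (Fin 2) ℝ,
          IsStable ((!![0, 0; 0, 2] : Matrix (Fin 2) (Fin 2) ℝ) + B * K) →
          (lyapP !![0, 0; 0, 2] B Q R 0 γ).trace < (lyapP !![0, 0; 0, 2] B Q R K γ).trace := by
  have hspec : (2 : ℂ) ∈ spectrum ℂ
      ((!![0, 0; 0, 2] : Matrix (Fin 2) (Fin 2) ℝ).map Complex.ofReal) := by
    rw [spectrum.mem_iff, isUnit_iff_isUnit_det, det_fin_two]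
    simp [algebraMap_matrix_apply]
  have hcost := reward_shaping_impossible_general !![1; 1] hQ.posSemidef hR
    (Set.Ioc_subset_Icc_self hγ) hspec (by simp) (lyapP !![0, 0; 0, 2] 0 Q R 0 γ).trace
  obtain ⟨ε, hexpensive, hε⟩ := ((hcost.filter_mono nhdsWithin_le_nhds).and
    eventually_mem_nhdsWithin : ∀ᶠ ε in 𝓝[≠] (0 : ℝ), _ ∧ ε ∈ ({0}ᶜ : Set ℝ)).exists
  refine ⟨ε • !![1; 1], ?_, fun K hK ↦ ?_⟩
  · rw [isUnit_iff_isUnit_det, isUnit_iff_ne_zero, det_fin_two]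
    simpa [mul_apply] using hε
  · rw [lyapP_zero_controller _ _ 0]
    exact hexpensive K hK
end

section
/- Suppose Q + KᵀRK ⪰ I, let γ₁ ∈ (0,1] be such that √γ₁·(A + BK) is stable, and let P₁ be the solution of the Lyapunov equation P₁ = (Q + KᵀRK) + γ₁·(A+BK)ᵀ P₁ (A+BK). Set c := 1/(8‖P₁‖_op⁴) + 1 and γ₂ := c²·γ₁. Then √γ₂·(A + BK) is also stable, and the solution P₂ of the Lyapunov equation P₂ = (Q + KᵀRK) + γ₂·(A+BK)ᵀ P₂ (A+BK) satisfies tr(P₂ − P₁) ≤ tr(P₁). -/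
open Matrix

/-- Euclidean operator norm of a real matrix. -/
noncomputable def opNorm {p q : ℕ} (M : Matrix (Fin p) (Fin q) ℝ) : ℝ :=
  ‖LinearMap.toContinuousLinearMap (Matrix.toEuclideanLin M)‖

/-!
Write `N = √γ₁ (A + BK)` and `S = Q + KᵀRK`, so that `P₁ = S + NᵀP₁N` and `√γ₂ (A + BK) = cN`.
In the Loewner order `1 ≤ S ≤ P₁ ≤ ‖P₁‖`, and `c` is so close to `1` that `2(c² - 1)‖P₁‖ ≤ 1`;
hence `2(c² - 1)P₁ ≤ S`. Therefore `P₁ - (cN)ᵀP₁(cN) = c²S - (c² - 1)P₁` is positive definite,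
which makes `P₁` a Lyapunov function for `cN`. The same expression is at least `S / 2`, so `2P₁` is
a supersolution of the equation solved by `P₂`, and `P₂ ≤ 2P₁` by comparison.
-/

open Filter Topology
open scoped ComplexOrder MatrixOrder Matrix.Norms.L2Operator

/-- `P` solves the discrete-time Lyapunov (Stein) equation with dynamics `N` and stage cost `S`.
A discount factor `γ` is absorbed into the dynamics as `N = √γ M`. -/
def IsLyapunovSolution {A : Type*} [Mul A] [Add A] [Star A] (N S P : A) : Prop :=
  P = S + star N * P * N

section StarRing

variable {A : Type*} [Ring A] [StarRing A] {N S P P' : A}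

theorem IsLyapunovSolution.sub_star_smul_mul_mul_smul [Algebra ℝ A] [StarModule ℝ A]
    (hP : IsLyapunovSolution N S P) (c : ℝ) :
    P - star (c • N) * P * (c • N) = c ^ 2 • S - (c ^ 2 - 1) • P := by
  have hN : star N * P * N = P - S := eq_sub_of_add_eq' hP.symm
  have hscale : star (c • N) * P * (c • N) = c ^ 2 • (star N * P * N) := by
    simp only [star_smul, star_trivial, smul_mul_assoc, mul_smul_comm, smul_smul, sq]
  rw [hscale, hN]
  module

variable [PartialOrder A] [StarOrderedRing A]

theorem nonneg_of_star_mul_mul_le_self [TopologicalSpace A] [IsTopologicalRing A]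
    [ContinuousStar A] [ClosedIicTopology A] {X : A}
    (hN : Tendsto (fun k : ℕ ↦ N ^ k) atTop (𝓝 0)) (hX : star N * X * N ≤ X) : 0 ≤ X := by
  have hpow (k : ℕ) : star (N ^ k) * X * N ^ k ≤ X := by
    induction k with
    | zero => simp
    | succ k ih =>
      calc star (N ^ (k + 1)) * X * N ^ (k + 1)
          = star N * (star (N ^ k) * X * N ^ k) * N := by
            rw [pow_succ, star_mul]
            simp only [mul_assoc]
        _ ≤ star N * X * N := star_left_conjugate_le_conjugate ih N
        _ ≤ X := hX
  have hlim : Tendsto (fun k : ℕ ↦ star (N ^ k) * X * N ^ k) atTop (𝓝 0) := by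
    simpa using (hN.star.mul_const X).mul hN
  exact le_of_tendsto' hlim hpow

namespace IsLyapunovSolution

theorem nonneg [TopologicalSpace A] [IsTopologicalRing A] [ContinuousStar A]
    [ClosedIicTopology A] (hP : IsLyapunovSolution N S P)
    (hN : Tendsto (fun k : ℕ ↦ N ^ k) atTop (𝓝 0)) (hS : 0 ≤ S) : 0 ≤ P :=
  nonneg_of_star_mul_mul_le_self hN <| (le_add_of_nonneg_left hS).trans_eq hP.symm

theorem cost_le (hP : IsLyapunovSolution N S P) (hP₀ : 0 ≤ P) : S ≤ P :=
  (le_add_of_nonneg_right (star_left_conjugate_nonneg hP₀ N)).trans_eq hP.symm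

theorem le_two_smul [Algebra ℝ A] [StarModule ℝ A] [IsOrderedModule ℝ A] [TopologicalSpace A]
    [IsTopologicalRing A] [ContinuousStar A] [ClosedIicTopology A] {c : ℝ}
    (hP : IsLyapunovSolution N S P) (hP' : IsLyapunovSolution (c • N) S P')
    (hN : Tendsto (fun k : ℕ ↦ (c • N) ^ k) atTop (𝓝 0)) (hc : 1 ≤ c) (hS : 0 ≤ S)
    (hPS : (2 * (c ^ 2 - 1)) • P ≤ S) : P' ≤ (2 : ℝ) • P := by
  have hc₂ : 0 ≤ c ^ 2 - 1 := by nlinarith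
  have hdiff : ((2 : ℝ) • P - P') - star (c • N) * ((2 : ℝ) • P - P') * (c • N)
      = (S - (2 * (c ^ 2 - 1)) • P) + (2 * (c ^ 2 - 1)) • S := by
    calc _ = (2 : ℝ) • (P - star (c • N) * P * (c • N)) - (P' - star (c • N) * P' * (c • N)) := by
          rw [mul_sub, sub_mul, mul_smul_comm (2 : ℝ), smul_mul_assoc (2 : ℝ)]
          module
      _ = (2 : ℝ) • (c ^ 2 • S - (c ^ 2 - 1) • P) - S := by
          rw [hP.sub_star_smul_mul_mul_smul, sub_eq_of_eq_add hP']
      _ = _ := by module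
  refine sub_nonneg.1 (nonneg_of_star_mul_mul_le_self hN (sub_nonneg.1 ?_))
  rw [hdiff]
  exact add_nonneg (sub_nonneg.2 hPS) (smul_nonneg (by positivity) hS)

end IsLyapunovSolution

end StarRing

theorem two_mul_sq_sub_one_mul_le_one {p : ℝ} (hp : 1 ≤ p) :
    2 * ((1 / (8 * p ^ 4) + 1) ^ 2 - 1) * p ≤ 1 := by
  have hpε : 1 / (8 * p ^ 4) * p ≤ 1 / 8 := by
    rw [div_mul_eq_mul_div, one_mul, div_le_div_iff₀ (by positivity) (by norm_num)]
    linarith [le_self_pow₀ hp four_ne_zero]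
  have hε : 1 / (8 * p ^ 4) ≤ 1 / 8 :=
    (le_mul_of_one_le_right (by positivity) hp).trans hpε
  have hε₀ : 0 ≤ 1 / (8 * p ^ 4) := by positivity
  generalize 1 / (8 * p ^ 4) = ε at *
  calc 2 * ((ε + 1) ^ 2 - 1) * p = 2 * (ε * p) * (ε + 2) := by ring
    _ ≤ 2 * (1 / 8) * (1 / 8 + 2) := by gcongr
    _ ≤ 1 := by norm_num

section IsometricContinuousFunctionalCalculus

variable {A : Type*} [NormedRing A] [StarRing A] [NormedAlgebra ℝ A]
  [IsometricContinuousFunctionalCalculus ℝ A IsSelfAdjoint] {a s p : A}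

theorem le_norm_of_mem_spectrum (ha : IsSelfAdjoint a) {r : ℝ} (hr : r ∈ spectrum ℝ a) :
    r ≤ ‖a‖ :=
  (Real.le_norm_self r).trans <| by
    simpa only [id_eq, cfc_id ℝ a] using norm_apply_le_norm_cfc id a hr

variable [PartialOrder A] [StarOrderedRing A]

theorem le_norm_smul_one (ha : IsSelfAdjoint a) : a ≤ ‖a‖ • 1 := by
  rw [← Algebra.algebraMap_eq_smul_one]
  exact le_algebraMap_of_spectrum_le fun r hr ↦ le_norm_of_mem_spectrum ha hr

variable [NonnegSpectrumClass ℝ A]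

theorem one_le_norm_of_one_le [Nontrivial A] (ha : 1 ≤ a) : 1 ≤ ‖a‖ := by
  have hsa : IsSelfAdjoint a := .of_nonneg (zero_le_one.trans ha)
  obtain ⟨r, hr⟩ := ContinuousFunctionalCalculus.spectrum_nonempty (R := ℝ) a hsa
  rw [← map_one (algebraMap ℝ A), algebraMap_le_iff_le_spectrum] at ha
  exact (ha r hr).trans (le_norm_of_mem_spectrum hsa hr)

theorem two_mul_sq_sub_one_smul_le [IsOrderedModule ℝ A] (hs : 1 ≤ s) (hsp : s ≤ p) :
    (2 * ((1 / (8 * ‖p‖ ^ 4) + 1) ^ 2 - 1)) • p ≤ s := by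
  cases subsingleton_or_nontrivial A
  · exact (Subsingleton.elim _ _).le
  set t := 2 * ((1 / (8 * ‖p‖ ^ 4) + 1) ^ 2 - 1)
  have hp : 1 ≤ p := hs.trans hsp
  have ht : 0 ≤ t :=
    mul_nonneg zero_le_two (sub_nonneg.2 (one_le_pow₀ (le_add_of_nonneg_left (by positivity))))
  calc t • p ≤ t • ‖p‖ • (1 : A) :=
        smul_le_smul_of_nonneg_left (le_norm_smul_one (.of_nonneg (zero_le_one.trans hp))) ht
    _ = (t * ‖p‖) • 1 := smul_smul ..
    _ ≤ (1 : ℝ) • 1 :=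
        smul_le_smul_of_nonneg_right
          (two_mul_sq_sub_one_mul_le_one (one_le_norm_of_one_le hp)) zero_le_one
    _ = 1 := one_smul ..
    _ ≤ s := hs

end IsometricContinuousFunctionalCalculus

theorem tendsto_pow_zero_of_spectralRadius_lt_one {A : Type*} [NormedRing A] [NormedAlgebra ℂ A]
    [CompleteSpace A] {a : A} (ha : spectralRadius ℂ a < 1) :
    Tendsto (fun k : ℕ ↦ a ^ k) atTop (𝓝 0) := by
  obtain ⟨r, har, hr⟩ := ENNReal.lt_iff_exists_nnreal_btwn.1 ha
  have hroot : ∀ᶠ k : ℕ in atTop, (‖a ^ k‖₊ : ENNReal) ^ (1 / k : ℝ) < r :=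
    (spectrum.pow_nnnorm_pow_one_div_tendsto_nhds_spectralRadius a).eventually_lt_const har
  refine squeeze_zero_norm' ?_
    (tendsto_pow_atTop_nhds_zero_of_lt_one r.2 (by exact_mod_cast hr : (r : ℝ) < 1))
  filter_upwards [hroot, eventually_gt_atTop 0] with k hk hk₀
  rw [one_div, ENNReal.rpow_inv_lt_iff (by exact_mod_cast hk₀), ENNReal.rpow_natCast] at hk
  exact_mod_cast hk.le

section Matrix

variable {n 𝕜 : Type*} [RCLike 𝕜]

theorem isClosed_setOf_posSemidef [Finite n] :
    IsClosed {X : Matrix n n 𝕜 | X.PosSemidef} := by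
  cases nonempty_fintype n
  simp only [posSemidef_iff_dotProduct_mulVec, Set.ofPred_and, Set.ofPred_forall]
  refine .inter (isClosed_eq (by fun_prop) (by fun_prop)) (isClosed_iInter fun x ↦ ?_)
  exact isClosed_le continuous_const (by fun_prop)

instance orderClosedTopology_matrix [Finite n] : OrderClosedTopology (Matrix n n 𝕜) where
  isClosed_le' := isClosed_setOf_posSemidef.preimage (continuous_snd.sub continuous_fst)

theorem posSemidef_map_algebraMap [Finite n] {P : Matrix n n ℝ} (hP : P.PosSemidef) :
    (P.map (algebraMap ℝ 𝕜)).PosSemidef := by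
  classical
  cases nonempty_fintype n
  obtain ⟨B, rfl⟩ := CStarAlgebra.nonneg_iff_eq_star_mul_self.1 hP.nonneg
  have hB : (star B * B).map (algebraMap ℝ 𝕜)
      = (B.map (algebraMap ℝ 𝕜))ᴴ * B.map (algebraMap ℝ 𝕜) := by
    rw [Matrix.map_mul, star_eq_conjTranspose, conjTranspose_map _ fun x ↦ by simp]
  rw [hB]
  exact posSemidef_conjTranspose_mul_self _

theorem posDef_map_algebraMap [Finite n] {P : Matrix n n ℝ} (hP : P.PosDef) :
    (P.map (algebraMap ℝ 𝕜)).PosDef := by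
  classical
  cases nonempty_fintype n
  exact (posSemidef_map_algebraMap hP.posSemidef).posDef_iff_isUnit.2
    (hP.isUnit.map (algebraMap ℝ 𝕜).mapMatrix)

theorem norm_lt_one_of_mem_spectrum [Fintype n] [DecidableEq n] {M P : Matrix n n 𝕜}
    (hP : P.PosSemidef) (hPM : (P - Mᴴ * P * M).PosDef) {μ : 𝕜} (hμ : μ ∈ spectrum 𝕜 M) :
    ‖μ‖ < 1 := by
  obtain ⟨v, hv, hMv⟩ : ∃ v ≠ 0, M *ᵥ v = μ • v := by
    rw [← spectrum_toLin', ← Module.End.hasEigenvalue_iff_mem_spectrum] at hμ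
    obtain ⟨v, hv⟩ := hμ.exists_hasEigenvector
    exact ⟨v, hv.2, hv.apply_eq_smul⟩
  have hquad : star v ⬝ᵥ ((P - Mᴴ * P * M) *ᵥ v)
      = ((1 - ‖μ‖ ^ 2 : ℝ) : 𝕜) * (star v ⬝ᵥ (P *ᵥ v)) := by
    rw [sub_mulVec, dotProduct_sub, ← mulVec_mulVec, ← mulVec_mulVec, dotProduct_mulVec _ Mᴴ,
      ← star_mulVec, hMv, mulVec_smul, star_smul, smul_dotProduct, dotProduct_smul, smul_eq_mul,
      smul_eq_mul, ← mul_assoc, RCLike.star_def, RCLike.conj_mul]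
    push_cast
    ring
  have hpos : 0 < (1 - ‖μ‖ ^ 2) * RCLike.re (star v ⬝ᵥ (P *ᵥ v)) := by
    simpa only [hquad, RCLike.re_ofReal_mul] using hPM.re_dotProduct_pos hv
  have hμ₂ : 0 < 1 - ‖μ‖ ^ 2 := pos_of_mul_pos_left hpos (hP.re_dotProduct_nonneg v)
  nlinarith [norm_nonneg μ]

end Matrix

namespace IsStable

variable {d : ℕ} {M P : Matrix (Fin d) (Fin d) ℝ}

theorem spectralRadius_lt_one (hM : IsStable M) :
    spectralRadius ℂ (M.map Complex.ofReal) < 1 := by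
  cases subsingleton_or_nontrivial (Matrix (Fin d) (Fin d) ℂ)
  · simp [spectrum.SpectralRadius.of_subsingleton]
  · exact_mod_cast spectrum.spectralRadius_lt_of_forall_lt _ (r := 1) hM

theorem tendsto_pow (hM : IsStable M) : Tendsto (fun k : ℕ ↦ M ^ k) atTop (𝓝 0) := by
  have hre : Continuous fun X : Matrix (Fin d) (Fin d) ℂ ↦ X.map Complex.re :=
    continuous_id.matrix_map Complex.continuous_re
  have hlim := (hre.tendsto 0).comp
    (tendsto_pow_zero_of_spectralRadius_lt_one hM.spectralRadius_lt_one)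
  have hpow (k : ℕ) : ((M.map Complex.ofReal) ^ k).map Complex.re = M ^ k := by
    rw [show (M.map Complex.ofReal) ^ k = (M ^ k).map Complex.ofReal from
      (map_pow Complex.ofRealHom.mapMatrix M k).symm]
    ext
    simp
  simpa [Function.comp_def, hpow] using hlim

theorem of_posDef_sub (hP : P.PosSemidef) (hPM : (P - star M * P * M).PosDef) : IsStable M := by
  intro μ hμ
  refine norm_lt_one_of_mem_spectrum (posSemidef_map_algebraMap hP) ?_ hμ
  have hmap : (P - star M * P * M).map (algebraMap ℝ ℂ) = P.map (algebraMap ℝ ℂ)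
      - (M.map Complex.ofReal)ᴴ * P.map (algebraMap ℝ ℂ) * M.map Complex.ofReal := by
    rw [Matrix.map_sub _ (map_sub _), Matrix.map_mul, Matrix.map_mul, star_eq_conjTranspose,
      conjTranspose_map _ fun x ↦ by simp]
    rfl
  exact hmap ▸ posDef_map_algebraMap hPM

end IsStable

namespace IsLyapunovSolution

variable {d : ℕ} {N S P : Matrix (Fin d) (Fin d) ℝ} {c : ℝ}

theorem isStable_smul (hP : IsLyapunovSolution N S P) (hP₀ : 0 ≤ P) (hc : 1 ≤ c) (hS : S.PosDef)
    (hPS : (2 * (c ^ 2 - 1)) • P ≤ S) : IsStable (c • N) := by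
  refine .of_posDef_sub hP₀.posSemidef ?_
  have hsplit : P - star (c • N) * P * (c • N)
      = (c ^ 2 - 1 / 2) • S + (1 / 2 : ℝ) • (S - (2 * (c ^ 2 - 1)) • P) := by
    rw [hP.sub_star_smul_mul_mul_smul]
    module
  rw [hsplit]
  exact (hS.smul (by nlinarith)).add_posSemidef ((le_iff.1 hPS).smul (by norm_num))

theorem sqrt_smul_iff {M : Matrix (Fin d) (Fin d) ℝ} {γ : ℝ} (hγ : 0 ≤ γ) :
    IsLyapunovSolution (√γ • M) S P ↔ P = S + γ • (Mᵀ * P * M) := by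
  rw [IsLyapunovSolution, star_eq_conjTranspose, conjTranspose_eq_transpose_of_trivial,
    transpose_smul, smul_mul_assoc, smul_mul_assoc, mul_smul_comm, smul_smul, Real.mul_self_sqrt hγ]

end IsLyapunovSolution

theorem opNorm_eq_norm {p q : ℕ} (M : Matrix (Fin p) (Fin q) ℝ) : opNorm M = ‖M‖ :=
  rfl

theorem discount_increase_general {d : ℕ} (M : Matrix (Fin d) (Fin d) ℝ)
    {S P₁ : Matrix (Fin d) (Fin d) ℝ} {γ₁ : ℝ} (hS : (S - 1).PosSemidef) (hγ₁ : 0 ≤ γ₁)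
    (hstab : IsStable (√γ₁ • M)) (hP₁ : P₁ = S + γ₁ • (Mᵀ * P₁ * M)) :
    IsStable (√((1 / (8 * opNorm P₁ ^ 4) + 1) ^ 2 * γ₁) • M)
    ∧ ∀ P₂ : Matrix (Fin d) (Fin d) ℝ,
        P₂ = S + ((1 / (8 * opNorm P₁ ^ 4) + 1) ^ 2 * γ₁) • (Mᵀ * P₂ * M) →
        (P₂ - P₁).trace ≤ P₁.trace := by
  simp only [opNorm_eq_norm]
  set c := 1 / (8 * ‖P₁‖ ^ 4) + 1
  have hc : 1 ≤ c := le_add_of_nonneg_left (by positivity)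
  have hscale : √(c ^ 2 * γ₁) • M = c • √γ₁ • M := by
    rw [Real.sqrt_mul (sq_nonneg c), Real.sqrt_sq (by positivity), mul_smul]
  have hS₀ : 0 ≤ S := PosSemidef.one.nonneg.trans hS
  have hlyap₁ := (IsLyapunovSolution.sqrt_smul_iff hγ₁).2 hP₁
  have hP₁₀ : 0 ≤ P₁ := hlyap₁.nonneg hstab.tendsto_pow hS₀
  have hmargin : (2 * (c ^ 2 - 1)) • P₁ ≤ S :=
    two_mul_sq_sub_one_smul_le hS (hlyap₁.cost_le hP₁₀)
  have hS_pos : S.PosDef := by simpa using PosDef.one.add_posSemidef hS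
  have hstab₂ : IsStable (c • √γ₁ • M) := hlyap₁.isStable_smul hP₁₀ hc hS_pos hmargin
  refine ⟨hscale ▸ hstab₂, fun P₂ hP₂ ↦ ?_⟩
  have hlyap₂ : IsLyapunovSolution (c • √γ₁ • M) S P₂ :=
    hscale ▸ (IsLyapunovSolution.sqrt_smul_iff (by positivity)).2 hP₂
  have hP₂_le : P₂ ≤ (2 : ℝ) • P₁ :=
    hlyap₁.le_two_smul hlyap₂ hstab₂.tendsto_pow hc hS₀ hmargin
  have htrace := (le_iff.1 hP₂_le).trace_nonneg
  rw [trace_sub, trace_smul, smul_eq_mul] at htrace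
  rw [trace_sub]
  linarith

/-- Increasing the discount factor from `γ₁` to `γ₂ = (1/(8‖P₁‖⁴) + 1)² γ₁` keeps
`√γ₂ (A+BK)` stable and at most doubles the trace of the Lyapunov solution. -/
theorem discount_increase {d m : ℕ}
    (A : Matrix (Fin d) (Fin d) ℝ) (B : Matrix (Fin d) (Fin m) ℝ)
    (Q : Matrix (Fin d) (Fin d) ℝ) (R : Matrix (Fin m) (Fin m) ℝ)
    (K : Matrix (Fin m) (Fin d) ℝ)
    (hQK : (Q + Kᵀ * R * K - 1).PosSemidef)
    (γ₁ : ℝ) (hγ₁ : γ₁ ∈ Set.Ioc (0 : ℝ) 1)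
    (hstab : IsStable (Real.sqrt γ₁ • (A + B * K)))
    (P₁ : Matrix (Fin d) (Fin d) ℝ)
    (hP₁ : P₁ = (Q + Kᵀ * R * K) + γ₁ • ((A + B * K)ᵀ * P₁ * (A + B * K))) :
    IsStable (Real.sqrt ((1 / (8 * opNorm P₁ ^ 4) + 1) ^ 2 * γ₁) • (A + B * K))
    ∧ ∀ P₂ : Matrix (Fin d) (Fin d) ℝ,
        P₂ = (Q + Kᵀ * R * K)
            + ((1 / (8 * opNorm P₁ ^ 4) + 1) ^ 2 * γ₁) • ((A + B * K)ᵀ * P₂ * (A + B * K)) →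
        (P₂ - P₁).trace ≤ P₁.trace :=
  discount_increase_general (A + B * K) hQK hγ₁.1.le hstab hP₁
end

section
/- Let A ∈ ℝ^{d×d} be a stable matrix (spectral radius < 1), let Q ⪰ I, and let P be the unique solution of the discrete-time Lyapunov equation P = Q + Aᵀ P A. Then for all integers j ≥ 0: (Aᵀ)^j A^j ⪯ (Aᵀ)^j P A^j ⪯ (1 − 1/‖P‖_op)^j · P, where ⪯ denotes the Loewner (positive semidefinite) order. -/
open Matrix

/-! Since `Q ≥ 0`, iterating `AᵀPA ≤ P` and letting `Aⁿ → 0` gives `P ≥ 0`, hence `P ≥ Q ≥ 1`.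
As `P ≤ ‖P‖ • 1`, subtracting `Q ≥ 1 ≥ P / ‖P‖` from `P` gives `AᵀPA ≤ (1 - 1 / ‖P‖) P`, and
conjugating by powers of `A` iterates this inequality. The argument uses only the order and the
norm of a C⋆-algebra. -/

open Filter Topology

lemma tendsto_pow_atTop_nhds_zero_of_spectralRadius_lt_one {B : Type*} [NormedRing B]
    [NormedAlgebra ℂ B] [CompleteSpace B] {a : B} (ha : spectralRadius ℂ a < 1) :
    Tendsto (a ^ ·) atTop (𝓝 0) := by
  obtain ⟨r, har, hr1⟩ := ENNReal.lt_iff_exists_nnreal_btwn.1 ha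
  have norm_pow_le : ∀ᶠ n in atTop, ‖a ^ n‖ ≤ (r : ℝ) ^ n := by
    filter_upwards [eventually_gt_atTop 0,
      (spectrum.pow_nnnorm_pow_one_div_tendsto_nhds_spectralRadius a).eventually_le_const har]
      with n hn hroot
    rw [one_div, ENNReal.rpow_inv_le_iff (by positivity), ENNReal.rpow_natCast] at hroot
    exact_mod_cast hroot
  exact squeeze_zero_norm' norm_pow_le
    (tendsto_pow_atTop_nhds_zero_of_lt_one r.coe_nonneg (by exact_mod_cast hr1))

section StarOrderedRing

variable {R : Type*} [Semiring R] [StarRing R] [PartialOrder R] [StarOrderedRing R] {a p : R}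

lemma star_pow_mul_mul_pow_le_pow_smul {S : Type*} [CommSemiring S] [PartialOrder S] [Algebra S R]
    [PosSMulMono S R] {c : S} (hc : 0 ≤ c) (h : star a * p * a ≤ c • p) (j : ℕ) :
    star a ^ j * p * a ^ j ≤ c ^ j • p := by
  induction j with
  | zero => simp
  | succ j ih =>
    calc star a ^ (j + 1) * p * a ^ (j + 1)
        = star (a ^ j) * (star a * p * a) * a ^ j := by
          simp only [pow_succ (star a), pow_succ' a, star_pow, mul_assoc]
      _ ≤ star (a ^ j) * (c • p) * a ^ j := star_left_conjugate_le_conjugate h _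
      _ = c • (star a ^ j * p * a ^ j) := by
          rw [star_pow, mul_smul_comm, smul_mul_assoc]
      _ ≤ c • c ^ j • p := smul_le_smul_of_nonneg_left ih hc
      _ = c ^ (j + 1) • p := by rw [smul_smul, pow_succ']

lemma nonneg_of_star_mul_mul_le_self_s6 [TopologicalSpace R] [ContinuousMul R] [ContinuousStar R]
    [ClosedIicTopology R] (ha : Tendsto (a ^ ·) atTop (𝓝 0)) (h : star a * p * a ≤ p) :
    0 ≤ p := by
  have conj_tendsto_zero : Tendsto (fun n ↦ star a ^ n * p * a ^ n) atTop (𝓝 0) := by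
    simpa only [star_pow, star_zero, zero_mul] using (ha.star.mul_const p).mul ha
  refine le_of_tendsto' conj_tendsto_zero fun n ↦ ?_
  simpa only [one_pow, one_smul] using
    star_pow_mul_mul_pow_le_pow_smul (zero_le_one (α := ℕ)) (h.trans_eq (one_smul ℕ p).symm) n

end StarOrderedRing

section CStarRing

variable {R : Type*} [NormedRing R] [StarRing R] [CStarRing R] [CompleteSpace R]
  [NormedAlgebra ℝ R] [PartialOrder R] [StarOrderedRing R]
  [ContinuousFunctionalCalculus ℝ R IsSelfAdjoint] {a p q : R}

lemma le_norm_smul_one_s6 (hp : IsSelfAdjoint p) : p ≤ ‖p‖ • 1 := by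
  nontriviality R
  rw [← Algebra.algebraMap_eq_smul_one]
  exact le_algebraMap_of_spectrum_le fun x hx ↦
    (Real.le_norm_self x).trans (spectrum.norm_le_norm_of_mem hx)

variable [NonnegSpectrumClass ℝ R]

lemma one_le_norm_of_one_le_s6 [Nontrivial R] (hp : 1 ≤ p) : 1 ≤ ‖p‖ := by
  have hp_sa : IsSelfAdjoint p := .of_nonneg (zero_le_one.trans hp)
  obtain ⟨x, hx⟩ := ContinuousFunctionalCalculus.spectrum_nonempty (R := ℝ) p hp_sa
  have one_le : 1 ≤ x := (algebraMap_le_iff_le_spectrum (r := (1 : ℝ))).1 (by simpa using hp) x hx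
  exact one_le.trans ((Real.le_norm_self x).trans (spectrum.norm_le_norm_of_mem hx))

lemma star_mul_mul_le_smul_of_lyapunov [StarModule ℝ R] (hp_one : 1 ≤ p) (hq : 1 ≤ q)
    (hp : p = q + star a * p * a) : star a * p * a ≤ (1 - 1 / ‖p‖) • p := by
  nontriviality R
  have norm_pos : 0 < ‖p‖ := zero_lt_one.trans_le (one_le_norm_of_one_le_s6 hp_one)
  have smul_le_one : (1 / ‖p‖) • p ≤ 1 := by
    rw [one_div, inv_smul_le_iff_of_pos norm_pos]
    exact le_norm_smul_one_s6 (.of_nonneg (zero_le_one.trans hp_one))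
  calc star a * p * a = p - q := eq_sub_of_add_eq' hp.symm
    _ ≤ p - (1 / ‖p‖) • p := sub_le_sub_left (smul_le_one.trans hq) p
    _ = (1 - 1 / ‖p‖) • p := by rw [sub_smul, one_smul]

-- `a ^ n → 0` is stability in a form that does not refer to the spectrum over `ℂ`, so that real
-- C⋆-algebras such as `Matrix n n ℝ` are covered.
theorem lyapunov_decay_general [StarModule ℝ R] [ClosedIicTopology R]
    (ha : Tendsto (a ^ ·) atTop (𝓝 0)) (hq : 1 ≤ q) (hp : p = q + star a * p * a) (j : ℕ) :
    star a ^ j * a ^ j ≤ star a ^ j * p * a ^ j ∧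
      star a ^ j * p * a ^ j ≤ (1 - 1 / ‖p‖) ^ j • p := by
  nontriviality R
  have conj_le : star a * p * a ≤ p := by
    conv_rhs => rw [hp]
    exact le_add_of_nonneg_left (zero_le_one.trans hq)
  have hp_nonneg : 0 ≤ p := nonneg_of_star_mul_mul_le_self_s6 ha conj_le
  have hp_one : 1 ≤ p := by
    rw [hp]
    exact le_add_of_le_of_nonneg hq (star_left_conjugate_nonneg hp_nonneg a)
  have rate_nonneg : 0 ≤ 1 - 1 / ‖p‖ :=
    sub_nonneg.2 (div_le_one_of_le₀ (one_le_norm_of_one_le_s6 hp_one) (norm_nonneg p))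
  constructor
  · simpa only [star_pow, mul_one] using star_left_conjugate_le_conjugate hp_one (a ^ j)
  · exact star_pow_mul_mul_pow_le_pow_smul rate_nonneg
      (star_mul_mul_le_smul_of_lyapunov hp_one hq hp) j

end CStarRing

section Matrix

lemma isClosed_setOf_posSemidef_s6 {n R : Type*} [Finite n] [Ring R] [PartialOrder R] [StarRing R]
    [TopologicalSpace R] [IsTopologicalSemiring R] [ContinuousStar R] [OrderClosedTopology R] :
    IsClosed {M : Matrix n n R | M.PosSemidef} := by
  cases nonempty_fintype n
  simp only [posSemidef_iff_dotProduct_mulVec, IsHermitian, Set.ofPred_and, Set.ofPred_forall]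
  refine (isClosed_eq (by fun_prop) (by fun_prop)).inter (isClosed_iInter fun x ↦ ?_)
  exact isClosed_le (by fun_prop) (by fun_prop)

open scoped MatrixOrder ComplexOrder in
lemma matrix_closedIicTopology {n 𝕜 : Type*} [Finite n] [RCLike 𝕜] :
    ClosedIicTopology (Matrix n n 𝕜) where
  isClosed_Iic N :=
    isClosed_setOf_posSemidef_s6.preimage (continuous_const.sub continuous_id : Continuous (N - ·))

open scoped Matrix.Norms.L2Operator in
lemma IsStable.tendsto_pow_s6 {n : ℕ} {A : Matrix (Fin n) (Fin n) ℝ} (hA : IsStable A) :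
    Tendsto (A ^ ·) atTop (𝓝 0) := by
  have spectralRadius_lt_one : spectralRadius ℂ (A.map Complex.ofReal) < 1 := by
    rcases subsingleton_or_nontrivial (Matrix (Fin n) (Fin n) ℂ) with _ | _
    · simp
    · exact_mod_cast spectrum.spectralRadius_lt_of_forall_lt (r := 1) _ hA
  have tendsto_map : Tendsto (fun k ↦ (A ^ k).map Complex.ofReal) atTop (𝓝 0) :=
    (tendsto_pow_atTop_nhds_zero_of_spectralRadius_lt_one spectralRadius_lt_one).congr
      fun k ↦ (map_pow Complex.ofRealHom.mapMatrix A k).symm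
  have tendsto_re := ((continuous_id.matrix_map Complex.continuous_re).tendsto 0).comp tendsto_map
  simpa [Function.comp_def, Matrix.map_map] using tendsto_re

end Matrix

/-- Lyapunov decay: if `A` is stable, `Q ⪰ I` and `P = Q + AᵀPA`, then for all `j ≥ 0`,
`(Aᵀ)ʲ Aʲ ⪯ (Aᵀ)ʲ P Aʲ ⪯ (1 - 1/‖P‖_op)ʲ P` in the Loewner order. -/
theorem lyapunov_decay {d : ℕ}
    (A Q P : Matrix (Fin d) (Fin d) ℝ)
    (hA : IsStable A) (hQ : (Q - 1).PosSemidef)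
    (hP : P = Q + Aᵀ * P * A) :
    ∀ j : ℕ,
      ((Aᵀ) ^ j * P * A ^ j - (Aᵀ) ^ j * A ^ j).PosSemidef
      ∧ ((1 - 1 / opNorm P) ^ j • P - (Aᵀ) ^ j * P * A ^ j).PosSemidef := by
  -- For real matrices `star A`, `‖P‖` and `M ≤ N` unfold to `Aᵀ`, `opNorm P` and
  -- `(N - M).PosSemidef`.
  open scoped MatrixOrder Matrix.Norms.L2Operator in
  have := matrix_closedIicTopology (n := Fin d) (𝕜 := ℝ)
  exact lyapunov_decay_general hA.tendsto_pow_s6 hQ hP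
end

section
/- Let G(x,u) = A x + B u + f(x,u) with ‖f(x,u)‖ ≤ β(‖x‖² + ‖u‖²) whenever ‖x‖ + ‖u‖ ≤ r_nl. Let γ ∈ (0,1], Q ⪰ I, R ⪰ I, and let K be such that √γ·(A + BK) is stable, with Lyapunov solution P = P_{K,γ}. Let the damped nonlinear trajectory be x₀ given, x_{t+1} = √γ · G(x_t, K x_t), and set V₀ := x₀ᵀ P x₀. If V₀ ≤ r_nl² / (4 β² ‖P‖_op³), then for all t ≥ 0: ‖x_t‖² ≤ x_tᵀ P x_t ≤ V₀ · (1 − 1/(2‖P‖_op))^t. -/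
open Matrix

/-- Euclidean norm of a vector in `ℝ^n`. -/
noncomputable def evnorm {n : ℕ} (x : Fin n → ℝ) : ℝ :=
  ‖(WithLp.equiv 2 (Fin n → ℝ)).symm x‖

/-!
Let `V v = vᵀ P v` and `q v = vᵀ S v`, where `S = Q + Kᵀ R K` and `M = √γ (A + B K)`. The Lyapunov
equation says that the linear part of the dynamics lowers `V` by exactly `q`, while `Q, R ⪰ I`
gives `‖v‖² + ‖K v‖² ≤ q v ≤ V v ≤ ‖P‖ q v`. One step of the trajectory is `M v + e` with
`‖e‖ ≤ β q v`, and Young's inequality in the seminorm of `P` yields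
`V (M v + e) ≤ (1 + θ) (V v - q v) + (1 + θ⁻¹) V e` for every `θ > 0`. With
`θ = q v / (‖P‖ V v)` the smallness of `V v` turns this into
`V (M v + e) ≤ (1 - 1 / (2 ‖P‖)) V v`; in particular the smallness condition, and with it the
validity of the remainder bound, propagates along the trajectory.
-/

section SpectralRadius

open Filter NNReal ENNReal

theorem eventually_nnnorm_pow_le_of_spectralRadius_lt {𝔸 : Type*} [NormedRing 𝔸]
    [NormedAlgebra ℂ 𝔸] [CompleteSpace 𝔸] {a : 𝔸} {r : ℝ≥0} (h : spectralRadius ℂ a < r) :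
    ∀ᶠ t : ℕ in atTop, ‖a ^ t‖₊ ≤ r ^ t := by
  have gelfand := spectrum.pow_nnnorm_pow_one_div_tendsto_nhds_spectralRadius a
  filter_upwards [gelfand.eventually_lt_const h, eventually_gt_atTop 0] with t ht ht0
  rw [one_div, ENNReal.rpow_inv_lt_iff (by positivity), ENNReal.rpow_natCast] at ht
  exact_mod_cast ht.le

open scoped Matrix.Norms.Frobenius

theorem IsStable.spectralRadius_lt_one_s10 {n : ℕ} {M : Matrix (Fin n) (Fin n) ℝ} (h : IsStable M) :
    spectralRadius ℂ (M.map Complex.ofReal) < 1 := by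
  cases n with
  | zero => simp [spectrum.SpectralRadius.of_subsingleton]
  | succ n => exact spectrum.spectralRadius_lt_of_forall_lt (r := 1) _ h

variable {n : Type*} [Fintype n] [DecidableEq n]

theorem frobenius_norm_map_ofReal_pow (M : Matrix n n ℝ) (t : ℕ) :
    ‖M.map Complex.ofReal ^ t‖ = ‖M ^ t‖ := by
  have map_pow_eq : (M ^ t).map Complex.ofReal = M.map Complex.ofReal ^ t :=
    map_pow Complex.ofRealHom.mapMatrix M t
  rw [← map_pow_eq, frobenius_norm_map_eq _ _ Complex.norm_real]

theorem summable_transpose_pow_mul_mul_pow {M : Matrix n n ℝ} (S : Matrix n n ℝ)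
    (h : spectralRadius ℂ (M.map Complex.ofReal) < 1) :
    Summable fun t : ℕ ↦ (M ^ t)ᵀ * S * M ^ t := by
  obtain ⟨r, hMr, hr⟩ := ENNReal.lt_iff_exists_nnreal_btwn.1 h
  have hr1 : (r : ℝ) ^ 2 < 1 := pow_lt_one₀ r.2 (by exact_mod_cast hr) two_ne_zero
  have geometric : Summable fun t : ℕ ↦ ‖S‖ * ((r : ℝ) ^ 2) ^ t :=
    (summable_geometric_of_lt_one (by positivity) hr1).mul_left _
  refine .of_norm_bounded_eventually_nat geometric ?_
  filter_upwards [eventually_nnnorm_pow_le_of_spectralRadius_lt hMr] with t ht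
  have hMt : ‖M ^ t‖ ≤ (r : ℝ) ^ t := by
    rw [← frobenius_norm_map_ofReal_pow]
    exact_mod_cast ht
  calc ‖(M ^ t)ᵀ * S * M ^ t‖ ≤ ‖(M ^ t)ᵀ‖ * ‖S‖ * ‖M ^ t‖ := norm_mul₃_le
    _ = ‖S‖ * ‖M ^ t‖ ^ 2 := by rw [frobenius_norm_transpose]; ring
    _ ≤ ‖S‖ * ((r : ℝ) ^ t) ^ 2 := by gcongr
    _ = ‖S‖ * ((r : ℝ) ^ 2) ^ t := by rw [pow_right_comm]

end SpectralRadius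

section QuadraticForm

open scoped ComplexOrder in
theorem posSemidef_tsum {ι n 𝕜 : Type*} [Finite n] [RCLike 𝕜] {f : ι → Matrix n n 𝕜}
    (hf : ∀ i, (f i).PosSemidef) : (∑' i, f i).PosSemidef := by
  have := Fintype.ofFinite n
  by_cases hs : Summable f
  · refine .of_dotProduct_mulVec_nonneg ?_ fun v ↦ ?_
    · rw [IsHermitian, conjTranspose_tsum]
      exact tsum_congr fun i ↦ (hf i).isHermitian
    · let evalForm : Matrix n n 𝕜 →+ 𝕜 :=
        { toFun X := star v ⬝ᵥ X *ᵥ v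
          map_zero' := by simp
          map_add' X Y := by simp [add_mulVec, dotProduct_add] }
      have evalForm_continuous : Continuous evalForm := by
        change Continuous fun X : Matrix n n 𝕜 ↦ star v ⬝ᵥ X *ᵥ v
        fun_prop
      exact (hs.hasSum.map evalForm evalForm_continuous).nonneg
        fun i ↦ (hf i).dotProduct_mulVec_nonneg v
  · rw [tsum_eq_zero_of_not_summable hs]
    exact .zero

open scoped ComplexOrder in
theorem posSemidef_of_posSemidef_sub_one {n 𝕜 : Type*} [DecidableEq n] [RCLike 𝕜]
    {Q : Matrix n n 𝕜} (hQ : (Q - 1).PosSemidef) : Q.PosSemidef := by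
  simpa using hQ.add .one

theorem posSemidef_add_transpose_mul_mul {m n : Type*} [Fintype m] [Finite n] {Q : Matrix n n ℝ}
    {R : Matrix m m ℝ} (hQ : Q.PosSemidef) (hR : R.PosSemidef) (K : Matrix m n ℝ) :
    (Q + Kᵀ * R * K).PosSemidef := by
  have := Fintype.ofFinite n
  exact hQ.add (by simpa using hR.conjTranspose_mul_mul_same K)

variable {m n α : Type*} [Fintype m] [Fintype n]

theorem dotProduct_transpose_mul_mul_mulVec [CommSemiring α] (M : Matrix m n α)
    (P : Matrix m m α) (v : n → α) : v ⬝ᵥ (Mᵀ * P * M) *ᵥ v = M *ᵥ v ⬝ᵥ P *ᵥ M *ᵥ v := by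
  rw [← mulVec_mulVec, ← mulVec_mulVec, dotProduct_transpose_mulVec, dotProduct_comm]

theorem dotProduct_mulVec_nonneg_of_posSemidef {P : Matrix n n ℝ} (hP : P.PosSemidef)
    (v : n → ℝ) : 0 ≤ v ⬝ᵥ P *ᵥ v := by
  simpa using hP.dotProduct_mulVec_nonneg v

/- The difference of the two sides is `θ⁻¹` times the form at `θ • v - e`. -/
theorem dotProduct_mulVec_add_le_young {P : Matrix n n ℝ} (hP : P.PosSemidef) (v e : n → ℝ)
    {θ : ℝ} (hθ : 0 < θ) :
    (v + e) ⬝ᵥ P *ᵥ (v + e) ≤ (1 + θ) * (v ⬝ᵥ P *ᵥ v) + (1 + θ⁻¹) * (e ⬝ᵥ P *ᵥ e) := by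
  have symm : e ⬝ᵥ P *ᵥ v = v ⬝ᵥ P *ᵥ e := by
    rw [← dotProduct_transpose_mulVec, ← conjTranspose_eq_transpose_of_trivial, hP.isHermitian.eq]
  have nonneg := mul_nonneg (inv_nonneg.2 hθ.le)
    (dotProduct_mulVec_nonneg_of_posSemidef hP (θ • v - e))
  have difference : θ⁻¹ * ((θ • v - e) ⬝ᵥ P *ᵥ (θ • v - e)) =
      θ * (v ⬝ᵥ P *ᵥ v) - 2 * (v ⬝ᵥ P *ᵥ e) + θ⁻¹ * (e ⬝ᵥ P *ᵥ e) := by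
    simp only [mulVec_sub, mulVec_smul, sub_dotProduct, dotProduct_sub, smul_dotProduct,
      dotProduct_smul, smul_eq_mul, symm]
    field_simp
    ring
  simp only [mulVec_add, add_dotProduct, dotProduct_add, symm]
  linarith

end QuadraticForm

section EuclideanNorm

variable {n : ℕ}

theorem evnorm_nonneg (v : Fin n → ℝ) : 0 ≤ evnorm v := norm_nonneg _

theorem evnorm_sq (v : Fin n → ℝ) : evnorm v ^ 2 = v ⬝ᵥ v := by
  rw [evnorm, EuclideanSpace.real_norm_sq_eq]
  simp [dotProduct, sq]

theorem evnorm_smul (c : ℝ) (v : Fin n → ℝ) : evnorm (c • v) = |c| * evnorm v :=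
  norm_smul c (WithLp.toLp 2 v)

theorem dotProduct_mulVec_le_opNorm_mul (P : Matrix (Fin n) (Fin n) ℝ) (v : Fin n → ℝ) :
    v ⬝ᵥ P *ᵥ v ≤ opNorm P * evnorm v ^ 2 := by
  let T := LinearMap.toContinuousLinearMap (toEuclideanLin P)
  let w := WithLp.toLp 2 v
  calc v ⬝ᵥ P *ᵥ v = inner ℝ (T w) w := by
        simp [T, w, EuclideanSpace.inner_eq_star_dotProduct]
    _ ≤ ‖T w‖ * ‖w‖ := real_inner_le_norm _ _
    _ ≤ ‖T‖ * ‖w‖ * ‖w‖ := by gcongr; exact T.le_opNorm w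
    _ = opNorm P * evnorm v ^ 2 := by rw [mul_assoc, ← sq]; rfl

theorem one_le_opNorm_of_evnorm_sq_le [NeZero n] {P : Matrix (Fin n) (Fin n) ℝ}
    (h : ∀ v, evnorm v ^ 2 ≤ v ⬝ᵥ P *ᵥ v) : 1 ≤ opNorm P := by
  have norm_one_pos : 0 < evnorm (1 : Fin n → ℝ) ^ 2 := by
    simp [evnorm_sq, Nat.pos_of_neZero]
  refine le_of_mul_le_mul_right ?_ norm_one_pos
  simpa using (h 1).trans (dotProduct_mulVec_le_opNorm_mul P 1)

theorem evnorm_sq_le_of_posSemidef_sub_one {Q : Matrix (Fin n) (Fin n) ℝ}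
    (hQ : (Q - 1).PosSemidef) (v : Fin n → ℝ) : evnorm v ^ 2 ≤ v ⬝ᵥ Q *ᵥ v := by
  simpa [sub_mulVec, dotProduct_sub, evnorm_sq] using
    dotProduct_mulVec_nonneg_of_posSemidef hQ v

end EuclideanNorm

section LyapunovSeries

variable {n : Type*} [Fintype n] [DecidableEq n] {M S : Matrix n n ℝ}

/-- The series `∑ (Mᵗ)ᵀ S Mᵗ`, whose sum solves the discrete Lyapunov equation `P = S + Mᵀ P M`.
If the series diverges, this is the junk value `0`. -/
noncomputable def lyapunovSeries (M S : Matrix n n ℝ) : Matrix n n ℝ :=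
  ∑' t : ℕ, (M ^ t)ᵀ * S * M ^ t

theorem lyapunovSeries_posSemidef (M : Matrix n n ℝ) (hS : S.PosSemidef) :
    (lyapunovSeries M S).PosSemidef :=
  posSemidef_tsum fun t ↦ by simpa using hS.conjTranspose_mul_mul_same (M ^ t)

theorem lyapunovSeries_eq_add (h : Summable fun t : ℕ ↦ (M ^ t)ᵀ * S * M ^ t) :
    lyapunovSeries M S = S + Mᵀ * lyapunovSeries M S * M := by
  have shift (t : ℕ) :
      (M ^ (t + 1))ᵀ * S * M ^ (t + 1) = Mᵀ * ((M ^ t)ᵀ * S * M ^ t) * M := by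
    simp only [pow_succ, transpose_mul, Matrix.mul_assoc]
  calc lyapunovSeries M S = S + ∑' t : ℕ, Mᵀ * ((M ^ t)ᵀ * S * M ^ t) * M := by
        rw [lyapunovSeries, h.tsum_eq_zero_add, tsum_congr shift]
        simp
    _ = S + Mᵀ * lyapunovSeries M S * M := by
        rw [(h.mul_left _).tsum_mul_right, h.tsum_mul_left, lyapunovSeries]

theorem dotProduct_lyapunovSeries_mulVec (h : Summable fun t : ℕ ↦ (M ^ t)ᵀ * S * M ^ t)
    (v : n → ℝ) :
    v ⬝ᵥ lyapunovSeries M S *ᵥ v =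
      M *ᵥ v ⬝ᵥ lyapunovSeries M S *ᵥ M *ᵥ v + v ⬝ᵥ S *ᵥ v := by
  conv_lhs => rw [lyapunovSeries_eq_add h]
  rw [add_mulVec, dotProduct_add, dotProduct_transpose_mul_mul_mulVec, add_comm]

theorem lyapP_eq_lyapunovSeries {d m : ℕ} (A : Matrix (Fin d) (Fin d) ℝ)
    (B : Matrix (Fin d) (Fin m) ℝ) (Q : Matrix (Fin d) (Fin d) ℝ) (R : Matrix (Fin m) (Fin m) ℝ)
    (K : Matrix (Fin m) (Fin d) ℝ) {γ : ℝ} (hγ : 0 ≤ γ) :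
    lyapP A B Q R K γ = lyapunovSeries (Real.sqrt γ • (A + B * K)) (Q + Kᵀ * R * K) := by
  refine tsum_congr fun t ↦ ?_
  rw [smul_pow, transpose_smul, Matrix.smul_mul, Matrix.smul_mul, Matrix.mul_smul, smul_smul,
    ← mul_pow, Real.mul_self_sqrt hγ]

end LyapunovSeries

section Contraction

/- In the step estimate, `s = q / V` is the relative decrease of the linear part and `c = 1 / ‖P‖`.
The gap between the two sides decreases in `c`, down to `s (1 - s)² (2 - s) / 4` at `c = s`. -/
theorem one_add_mul_mul_le_one_sub_half {c s : ℝ} (hc : 0 ≤ c) (hcs : c ≤ s) (hs : s ≤ 1) :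
    (1 + c * s) * (1 - s + c * s / 4) ≤ 1 - c / 2 := by
  have hs0 : 0 ≤ s := hc.trans hcs
  have at_diagonal : 0 ≤ s * (1 - s) ^ 2 * (2 - s) :=
    mul_nonneg (by positivity) (by linarith)
  have linear_gap : 0 ≤ s * (s - c) * (5 / 4 - s) :=
    mul_nonneg (mul_nonneg hs0 (by linarith)) (by linarith)
  have quadratic_gap : 0 ≤ s ^ 2 * (s ^ 2 - c ^ 2) :=
    mul_nonneg (by positivity) (sub_nonneg.2 (by gcongr))
  linarith

theorem le_mul_one_sub_of_forall_young {W V q E p β : ℝ} (hV : 0 ≤ V) (hp : 0 < p)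
    (hqV : q ≤ V) (hVq : V ≤ p * q) (hsmall : 4 * β ^ 2 * p ^ 3 * V ≤ 1)
    (hE : E ≤ p * (β * q) ^ 2) (hW : ∀ θ > 0, W ≤ (1 + θ) * (V - q) + (1 + θ⁻¹) * E) :
    W ≤ V * (1 - 1 / (2 * p)) := by
  have hq : 0 ≤ q := nonneg_of_mul_nonneg_right (hV.trans hVq) hp
  rcases hV.eq_or_lt with rfl | hVpos
  · obtain rfl : q = 0 := hqV.antisymm hq
    have := hW 1 one_pos
    norm_num at this hE ⊢
    linarith
  have hqpos : 0 < q := pos_of_mul_pos_right (hVpos.trans_le hVq) hp.le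
  set c := 1 / p with hc
  set s := q / V with hs
  have hqs : q = V * s := by rw [hs]; field_simp
  have hpc : p * c = 1 := by rw [hc]; field_simp
  have hc0 : 0 < c := by positivity
  have hs0 : 0 < s := by positivity
  have hcs : c ≤ s := by
    rw [hc, hs, div_le_div_iff₀ hp hVpos]
    linarith
  have hE' : E ≤ V * (c * s) ^ 2 / 4 := by
    calc E ≤ p * (β * q) ^ 2 := hE
      _ = p * (β * q) ^ 2 * (p * c) ^ 2 := by rw [hpc]; ring
      _ = (4 * β ^ 2 * p ^ 3 * V) * (V * (c * s) ^ 2 / 4) := by rw [hqs]; ring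
      _ ≤ V * (c * s) ^ 2 / 4 := mul_le_of_le_one_left (by positivity) hsmall
  calc W ≤ (1 + c * s) * (V - q) + (1 + (c * s)⁻¹) * E := hW _ (mul_pos hc0 hs0)
    _ ≤ (1 + c * s) * (V - V * s) + (1 + (c * s)⁻¹) * (V * (c * s) ^ 2 / 4) := by
        rw [← hqs]; gcongr
    _ = V * ((1 + c * s) * (1 - s + c * s / 4)) := by field_simp; ring
    _ ≤ V * (1 - c / 2) := by
        gcongr
        exact one_add_mul_mul_le_one_sub_half hc0.le hcs (div_le_one_of_le₀ hqV hV)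
    _ = V * (1 - 1 / (2 * p)) := by rw [hc]; field_simp

theorem le_mul_pow_of_forall_le {V : ℕ → ℝ} {b ρ : ℝ} (hV : 0 ≤ V 0) (hρ0 : 0 ≤ ρ)
    (hρ1 : ρ ≤ 1) (h0 : V 0 ≤ b) (step : ∀ t, V t ≤ b → V (t + 1) ≤ V t * ρ) (t : ℕ) :
    V t ≤ V 0 * ρ ^ t := by
  induction t with
  | zero => simp
  | succ t ih =>
    have hVt : V t ≤ b := (ih.trans (mul_le_of_le_one_right hV (pow_le_one₀ hρ0 hρ1))).trans h0
    calc V (t + 1) ≤ V t * ρ := step t hVt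
      _ ≤ V 0 * ρ ^ t * ρ := by gcongr
      _ = V 0 * ρ ^ (t + 1) := by ring

variable {n : ℕ} {P S M : Matrix (Fin n) (Fin n) ℝ} {β r : ℝ}

theorem dotProduct_mulVec_perturbed_step_le (hP : P.PosSemidef) (hp : 0 < opNorm P)
    {v e : Fin n → ℝ} (hS : evnorm v ^ 2 ≤ v ⬝ᵥ S *ᵥ v)
    (hlyap : M *ᵥ v ⬝ᵥ P *ᵥ M *ᵥ v + v ⬝ᵥ S *ᵥ v ≤ v ⬝ᵥ P *ᵥ v)
    (hsmall : 4 * β ^ 2 * opNorm P ^ 3 * (v ⬝ᵥ P *ᵥ v) ≤ 1)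
    (he : evnorm e ≤ β * (v ⬝ᵥ S *ᵥ v)) :
    (M *ᵥ v + e) ⬝ᵥ P *ᵥ (M *ᵥ v + e) ≤ v ⬝ᵥ P *ᵥ v * (1 - 1 / (2 * opNorm P)) := by
  have form_nonneg := dotProduct_mulVec_nonneg_of_posSemidef hP
  have error_le : e ⬝ᵥ P *ᵥ e ≤ opNorm P * (β * (v ⬝ᵥ S *ᵥ v)) ^ 2 := by
    have := evnorm_nonneg e
    exact (dotProduct_mulVec_le_opNorm_mul P e).trans (by gcongr)
  have form_le : v ⬝ᵥ P *ᵥ v ≤ opNorm P * (v ⬝ᵥ S *ᵥ v) :=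
    (dotProduct_mulVec_le_opNorm_mul P v).trans (by gcongr)
  refine le_mul_one_sub_of_forall_young (form_nonneg v) hp (by linarith [form_nonneg (M *ᵥ v)])
    form_le hsmall error_le fun θ hθ ↦ ?_
  refine (dotProduct_mulVec_add_le_young hP (M *ᵥ v) e hθ).trans ?_
  gcongr
  linarith

theorem exp_decay_of_lyapunov (hP : P.PosSemidef) (hS : ∀ v, evnorm v ^ 2 ≤ v ⬝ᵥ S *ᵥ v)
    (hlyap : ∀ v, M *ᵥ v ⬝ᵥ P *ᵥ M *ᵥ v + v ⬝ᵥ S *ᵥ v ≤ v ⬝ᵥ P *ᵥ v) (hβ : 1 ≤ β)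
    (hr : r ^ 2 ≤ 1) {F : (Fin n → ℝ) → Fin n → ℝ}
    (hF : ∀ v, 2 * (v ⬝ᵥ S *ᵥ v) ≤ r ^ 2 → evnorm (F v - M *ᵥ v) ≤ β * (v ⬝ᵥ S *ᵥ v))
    {x : ℕ → Fin n → ℝ} (hx : ∀ t, x (t + 1) = F (x t))
    (h0 : x 0 ⬝ᵥ P *ᵥ x 0 ≤ r ^ 2 / (4 * β ^ 2 * opNorm P ^ 3)) (t : ℕ) :
    evnorm (x t) ^ 2 ≤ x t ⬝ᵥ P *ᵥ x t ∧
      x t ⬝ᵥ P *ᵥ x t ≤ x 0 ⬝ᵥ P *ᵥ x 0 * (1 - 1 / (2 * opNorm P)) ^ t := by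
  have form_nonneg := dotProduct_mulVec_nonneg_of_posSemidef hP
  have cost_le (v) : v ⬝ᵥ S *ᵥ v ≤ v ⬝ᵥ P *ᵥ v := by linarith [hlyap v, form_nonneg (M *ᵥ v)]
  have norm_sq_le (v) : evnorm v ^ 2 ≤ v ⬝ᵥ P *ᵥ v := (hS v).trans (cost_le v)
  refine ⟨norm_sq_le (x t), ?_⟩
  cases n with
  | zero => simp
  | succ n =>
    have hp : 1 ≤ opNorm P := one_le_opNorm_of_evnorm_sq_le norm_sq_le
    have rate_le_one : 1 / (2 * opNorm P) ≤ 1 := by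
      rw [div_le_one (by positivity)]
      linarith
    refine le_mul_pow_of_forall_le (V := fun t ↦ x t ⬝ᵥ P *ᵥ x t) (form_nonneg (x 0))
      (sub_nonneg.2 rate_le_one) (sub_le_self _ (by positivity)) h0 (fun t ht ↦ ?_) t
    rw [le_div_iff₀' (by positivity)] at ht
    have constant_ge : 1 ≤ β ^ 2 * opNorm P ^ 3 := one_le_mul_of_one_le_of_one_le
      (one_le_pow₀ hβ) (one_le_pow₀ hp)
    have in_domain : 2 * (x t ⬝ᵥ S *ᵥ x t) ≤ r ^ 2 := by
      nlinarith [cost_le (x t), form_nonneg (x t)]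
    have hstep := dotProduct_mulVec_perturbed_step_le hP (one_pos.trans_le hp) (hS (x t))
      (hlyap (x t)) (ht.trans hr) (hF (x t) in_domain)
    rwa [add_sub_cancel, ← hx] at hstep

end Contraction

section ClosedLoop

variable {d m : ℕ} {A : Matrix (Fin d) (Fin d) ℝ} {B : Matrix (Fin d) (Fin m) ℝ}
  {Q : Matrix (Fin d) (Fin d) ℝ} {R : Matrix (Fin m) (Fin m) ℝ}

theorem evnorm_sq_add_evnorm_sq_le_stageCost (hQ : (Q - 1).PosSemidef)
    (hR : (R - 1).PosSemidef) (K : Matrix (Fin m) (Fin d) ℝ) (v : Fin d → ℝ) :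
    evnorm v ^ 2 + evnorm (K *ᵥ v) ^ 2 ≤ v ⬝ᵥ (Q + Kᵀ * R * K) *ᵥ v := by
  rw [add_mulVec, dotProduct_add, dotProduct_transpose_mul_mul_mulVec]
  exact add_le_add (evnorm_sq_le_of_posSemidef_sub_one hQ v)
    (evnorm_sq_le_of_posSemidef_sub_one hR (K *ᵥ v))

theorem evnorm_sqrt_smul_closedLoop_sub_le {G : (Fin d → ℝ) → (Fin m → ℝ) → (Fin d → ℝ)}
    {K : Matrix (Fin m) (Fin d) ℝ} {β r γ q : ℝ} (hβ : 0 ≤ β) (hr : 0 ≤ r) (hγ : γ ≤ 1)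
    (hf : ∀ (x : Fin d → ℝ) (u : Fin m → ℝ), evnorm x + evnorm u ≤ r →
      evnorm (G x u - (A *ᵥ x + B *ᵥ u)) ≤ β * (evnorm x ^ 2 + evnorm u ^ 2))
    {v : Fin d → ℝ} (hq : evnorm v ^ 2 + evnorm (K *ᵥ v) ^ 2 ≤ q) (hqr : 2 * q ≤ r ^ 2) :
    evnorm (Real.sqrt γ • G v (K *ᵥ v) - (Real.sqrt γ • (A + B * K)) *ᵥ v) ≤ β * q := by
  have in_domain : evnorm v + evnorm (K *ᵥ v) ≤ r :=
    le_of_sq_le_sq (by linarith [add_sq_le (a := evnorm v) (b := evnorm (K *ᵥ v))]) hr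
  have remainder_eq : Real.sqrt γ • G v (K *ᵥ v) - (Real.sqrt γ • (A + B * K)) *ᵥ v =
      Real.sqrt γ • (G v (K *ᵥ v) - (A *ᵥ v + B *ᵥ K *ᵥ v)) := by
    rw [smul_mulVec, add_mulVec, mulVec_mulVec, smul_sub]
  rw [remainder_eq, evnorm_smul, abs_of_nonneg (Real.sqrt_nonneg γ)]
  calc Real.sqrt γ * evnorm (G v (K *ᵥ v) - (A *ᵥ v + B *ᵥ K *ᵥ v))
      ≤ evnorm (G v (K *ᵥ v) - (A *ᵥ v + B *ᵥ K *ᵥ v)) :=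
        mul_le_of_le_one_left (evnorm_nonneg _) (Real.sqrt_le_one.2 hγ)
    _ ≤ β * (evnorm v ^ 2 + evnorm (K *ᵥ v) ^ 2) := hf _ _ in_domain
    _ ≤ β * q := by gcongr

end ClosedLoop

/-- Exponential decay of damped nonlinear trajectories: under the quadratic remainder
bound, with `Q, R ⪰ I`, `√γ(A+BK)` stable, `P = P_{K,γ}`, and
`V₀ = x₀ᵀPx₀ ≤ r_nl²/(4β²‖P‖³)`, the trajectory `x_{t+1} = √γ G(x_t, Kx_t)` satisfies
`‖x_t‖² ≤ x_tᵀPx_t ≤ V₀ (1 - 1/(2‖P‖))ᵗ` for all `t`. -/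
theorem nonlinear_exp_decay {d m : ℕ}
    (G : (Fin d → ℝ) → (Fin m → ℝ) → (Fin d → ℝ))
    (A : Matrix (Fin d) (Fin d) ℝ) (B : Matrix (Fin d) (Fin m) ℝ)
    (Q : Matrix (Fin d) (Fin d) ℝ) (R : Matrix (Fin m) (Fin m) ℝ)
    (K : Matrix (Fin m) (Fin d) ℝ)
    (β rnl : ℝ) (hβ : 1 ≤ β) (hrnl0 : 0 < rnl) (hrnl1 : rnl ≤ 1)
    (hf : ∀ (x : Fin d → ℝ) (u : Fin m → ℝ), evnorm x + evnorm u ≤ rnl →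
      evnorm (G x u - (A.mulVec x + B.mulVec u)) ≤ β * (evnorm x ^ 2 + evnorm u ^ 2))
    (γ : ℝ) (hγ : γ ∈ Set.Ioc (0 : ℝ) 1)
    (hQ : (Q - 1).PosSemidef) (hR : (R - 1).PosSemidef)
    (hstab : IsStable (Real.sqrt γ • (A + B * K)))
    (x : ℕ → Fin d → ℝ)
    (hstep : ∀ t : ℕ, x (t + 1) = Real.sqrt γ • G (x t) (K.mulVec (x t)))
    (hV0 : x 0 ⬝ᵥ (lyapP A B Q R K γ).mulVec (x 0)
        ≤ rnl ^ 2 / (4 * β ^ 2 * opNorm (lyapP A B Q R K γ) ^ 3)) :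
    ∀ t : ℕ,
      evnorm (x t) ^ 2 ≤ x t ⬝ᵥ (lyapP A B Q R K γ).mulVec (x t)
      ∧ x t ⬝ᵥ (lyapP A B Q R K γ).mulVec (x t)
          ≤ (x 0 ⬝ᵥ (lyapP A B Q R K γ).mulVec (x 0))
              * (1 - 1 / (2 * opNorm (lyapP A B Q R K γ))) ^ t := by
  have cost_ge := evnorm_sq_add_evnorm_sq_le_stageCost hQ hR K
  have summable := summable_transpose_pow_mul_mul_pow (Q + Kᵀ * R * K) hstab.spectralRadius_lt_one_s10
  have cost_posSemidef := posSemidef_add_transpose_mul_mul (posSemidef_of_posSemidef_sub_one hQ)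
    (posSemidef_of_posSemidef_sub_one hR) K
  rw [lyapP_eq_lyapunovSeries A B Q R K hγ.1.le] at hV0 ⊢
  exact exp_decay_of_lyapunov
    (hP := lyapunovSeries_posSemidef _ cost_posSemidef)
    (hS := fun v ↦ (le_add_of_nonneg_right (sq_nonneg _)).trans (cost_ge v))
    (hlyap := fun v ↦ (dotProduct_lyapunovSeries_mulVec summable v).ge)
    (hβ := hβ) (hr := pow_le_one₀ hrnl0.le hrnl1)
    (hF := fun v ↦ evnorm_sqrt_smul_closedLoop_sub_le (by linarith) hrnl0.le hγ.2 hf (cost_ge v))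
    (hx := hstep) (h0 := hV0)
end
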